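/- Let t₁, t₂ ≥ 0 with t₁ + t₂ = 1, let n ≥ 0, and let (X,Y) ∈ Gr²(V) satisfy dim(X ∩ V_k) = dim(Y ∩ V_k) for all k ≥ n; set m = dim(X ∩ V_n). Then ρ_{t₁,t₂}(U^n(X,Y)) = q^{m(m+1) − Σ_{k=1}^n k·(Sym(X)_k + Sym(Y)_k)} · t₁^m · t₂^{n−m}. (Proposition 5.9: explicit values of the measure ρ_{t₁,t₂} on the basic sets of the groupoid Gr²(V).) -/

import Mathlib

open MeasureTheory

variable (F : Type) [Field F] [Fintype F] [DecidableEq F]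

/-- `V = ⊕_{i≥0} F`: the `F`-vector space of finitely supported sequences. -/
abbrev Vinf := ℕ →₀ F

/-- `V_n`: the span of the first `n` standard basis vectors of `V`. -/
def Vn (n : ℕ) : Submodule F (Vinf F) where
  carrier := {v | ∀ i : ℕ, n ≤ i → v i = 0}
  add_mem' := by
    intro a b ha hb i hi
    simp [Finsupp.add_apply, ha i hi, hb i hi]
  zero_mem' := by
    intro i hi
    simp
  smul_mem' := by
    intro c v hv i hi
    simp [Finsupp.smul_apply, hv i hi]

/-- The group `GLB` of `F`-linear automorphisms `g` of `V` with `g(V_n) = V_n` for all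
sufficiently large `n`. -/
def GLBgrp : Subgroup ((Vinf F) ≃ₗ[F] (Vinf F)) where
  carrier := {g | ∃ N : ℕ, ∀ n : ℕ, N ≤ n →
    Submodule.map (g : (Vinf F) →ₗ[F] (Vinf F)) (Vn F n) = Vn F n}
  one_mem' := by
    refine ⟨0, fun n _ => ?_⟩
    have h1 : ((1 : (Vinf F) ≃ₗ[F] (Vinf F)) : (Vinf F) →ₗ[F] (Vinf F)) = LinearMap.id := by
      ext x; rfl
    rw [h1, Submodule.map_id]
  mul_mem' := by
    rintro g h ⟨Ng, hg⟩ ⟨Nh, hh⟩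
    refine ⟨max Ng Nh, fun n hn => ?_⟩
    have h1 : ((g * h : (Vinf F) ≃ₗ[F] (Vinf F)) : (Vinf F) →ₗ[F] (Vinf F))
        = ((g : (Vinf F) →ₗ[F] (Vinf F)).comp (h : (Vinf F) →ₗ[F] (Vinf F))) := by
      ext x; rfl
    rw [h1, Submodule.map_comp, hh n (le_trans (le_max_right _ _) hn),
      hg n (le_trans (le_max_left _ _) hn)]
  inv_mem' := by
    rintro g ⟨N, hg⟩
    refine ⟨N, fun n hn => ?_⟩
    conv_lhs => rw [← hg n hn]
    rw [← Submodule.map_comp]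
    have h1 : ((g⁻¹ : (Vinf F) ≃ₗ[F] (Vinf F)) : (Vinf F) →ₗ[F] (Vinf F)).comp
        ((g : (Vinf F) →ₗ[F] (Vinf F))) = LinearMap.id := by
      have h0 : ((g⁻¹ * g : (Vinf F) ≃ₗ[F] (Vinf F)) : (Vinf F) →ₗ[F] (Vinf F))
          = ((g⁻¹ : (Vinf F) ≃ₗ[F] (Vinf F)) : (Vinf F) →ₗ[F] (Vinf F)).comp
            ((g : (Vinf F) →ₗ[F] (Vinf F))) := by
        ext x; rfl
      rw [← h0, inv_mul_cancel]
      ext x; rfl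
    rw [h1, Submodule.map_id]

/-- The Borel subgroup `B ⊆ GLB` of automorphisms with `g(V_n) = V_n` for all `n`. -/
def Bgrp : Subgroup ((Vinf F) ≃ₗ[F] (Vinf F)) where
  carrier := {g | ∀ n : ℕ,
    Submodule.map (g : (Vinf F) →ₗ[F] (Vinf F)) (Vn F n) = Vn F n}
  one_mem' := by
    intro n
    have h1 : ((1 : (Vinf F) ≃ₗ[F] (Vinf F)) : (Vinf F) →ₗ[F] (Vinf F)) = LinearMap.id := by
      ext x; rfl
    rw [h1, Submodule.map_id]
  mul_mem' := by
    intro g h hg hh n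
    have h1 : ((g * h : (Vinf F) ≃ₗ[F] (Vinf F)) : (Vinf F) →ₗ[F] (Vinf F))
        = ((g : (Vinf F) →ₗ[F] (Vinf F)).comp (h : (Vinf F) →ₗ[F] (Vinf F))) := by
      ext x; rfl
    rw [h1, Submodule.map_comp, hh n, hg n]
  inv_mem' := by
    intro g hg n
    conv_lhs => rw [← hg n]
    rw [← Submodule.map_comp]
    have h1 : ((g⁻¹ : (Vinf F) ≃ₗ[F] (Vinf F)) : (Vinf F) →ₗ[F] (Vinf F)).comp
        ((g : (Vinf F) →ₗ[F] (Vinf F))) = LinearMap.id := by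
      have h0 : ((g⁻¹ * g : (Vinf F) ≃ₗ[F] (Vinf F)) : (Vinf F) →ₗ[F] (Vinf F))
          = ((g⁻¹ : (Vinf F) ≃ₗ[F] (Vinf F)) : (Vinf F) →ₗ[F] (Vinf F)).comp
            ((g : (Vinf F) →ₗ[F] (Vinf F))) := by
        ext x; rfl
      rw [← h0, inv_mul_cancel]
      ext x; rfl
    rw [h1, Submodule.map_id]

/-- The Borel σ-algebra of `B` for the topology of pointwise convergence: the σ-algebra
generated by the evaluations `g ↦ g(e_i)` (with the finite set `V` discrete). -/
noncomputable instance mB : MeasurableSpace ↥(Bgrp F) := by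
  letI : MeasurableSpace (Vinf F) := ⊤
  exact MeasurableSpace.comap
    (fun g => fun i : ℕ => ((g : (Vinf F) ≃ₗ[F] (Vinf F)) (Finsupp.single i 1)))
    MeasurableSpace.pi

/-- The increment `Sym(X)_{k+1} = dim(X ∩ V_{k+1}) - dim(X ∩ V_k)` of the symbol of a
subspace `X ⊆ V` (0-based indexing: `symInc X k` is the `(k+1)`-st, 1-based, entry). -/
noncomputable def symInc (X : Submodule F (Vinf F)) (k : ℕ) : ℕ :=
  Module.finrank F ↥(X ⊓ Vn F (k + 1)) - Module.finrank F ↥(X ⊓ Vn F k)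

/-- The coordinate subspace `C(x) = span{e_i : x_i = 1}` of a 0–1 sequence `x`. -/
noncomputable def coordSpan (x : ℕ → Bool) : Submodule F (Vinf F) :=
  Submodule.span F ((fun i : ℕ => Finsupp.single i (1 : F)) '' {i : ℕ | x i = true})

/-- The map `φ : {0,1}^ℕ × B → Gr(V)`, `(x, g) ↦ g·C(x)`. -/
noncomputable def phiMap (p : (ℕ → Bool) × ↥(Bgrp F)) : Submodule F (Vinf F) :=
  Submodule.map ((p.2 : (Vinf F) ≃ₗ[F] (Vinf F)) : (Vinf F) →ₗ[F] (Vinf F)) (coordSpan F p.1)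

/-- The basic set `U^n(X,Y)` of the groupoid `Gr²(V)`: pairs `(Z,W)` of `GLB`-equivalent
subspaces with `Z ∩ V_n = X ∩ V_n`, `W ∩ V_n = Y ∩ V_n` and `dim(Z ∩ V_k) = dim(W ∩ V_k)`
for all `k ≥ n`. -/
def Upair (n : ℕ) (X Y : Submodule F (Vinf F)) :
    Set (Submodule F (Vinf F) × Submodule F (Vinf F)) :=
  {p | (∃ g ∈ GLBgrp F, Submodule.map (g : (Vinf F) →ₗ[F] (Vinf F)) p.1 = p.2) ∧
    p.1 ⊓ Vn F n = X ⊓ Vn F n ∧ p.2 ⊓ Vn F n = Y ⊓ Vn F n ∧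
    ∀ k : ℕ, n ≤ k → Module.finrank F ↥(p.1 ⊓ Vn F k) = Module.finrank F ↥(p.2 ⊓ Vn F k)}

/-- The σ-algebra of the groupoid `Gr²(V)`, generated by the sets `U^n(X,Y)`. -/
noncomputable instance mGr2 :
    MeasurableSpace (Submodule F (Vinf F) × Submodule F (Vinf F)) :=
  MeasurableSpace.generateFrom
    {A | ∃ (n : ℕ) (X Y : Submodule F (Vinf F)), A = Upair F n X Y}

/-- The set `T` of pairs of 0–1 sequences which eventually agree and whose initial segments
have matching numbers of ones. -/
def Tset : Set ((ℕ → Bool) × (ℕ → Bool)) :=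
  {p | ∃ N : ℕ, (∀ k : ℕ, N < k → p.1 k = p.2 k) ∧
    ((Finset.range (N + 1)).filter (fun k => p.1 k = true)).card
      = ((Finset.range (N + 1)).filter (fun k => p.2 k = true)).card}

/-- The basic subset `A(i₁,...,i_n; j₁,...,j_n)` of `T`. -/
def Aset (n : ℕ) (c d : Fin n → Bool) : Set ↥Tset :=
  {p | (∀ k : Fin n, p.1.1 (k : ℕ) = c k ∧ p.1.2 (k : ℕ) = d k) ∧
    ∀ k : ℕ, n ≤ k → p.1.1 k = p.1.2 k}

/-- The σ-algebra of `T`, generated by the sets `A(i₁,...,i_n; j₁,...,j_n)`. -/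
noncomputable instance mT : MeasurableSpace ↥Tset :=
  MeasurableSpace.generateFrom {S | ∃ (n : ℕ) (c d : Fin n → Bool), S = Aset n c d}

/-- The number of ones in a finite 0–1 sequence. -/
def trueCount {n : ℕ} (c : Fin n → Bool) : ℕ :=
  (Finset.univ.filter (fun k => c k = true)).card

/-- The map `ψ : T × B × B → Gr(V) × Gr(V)`, `ψ((x,y),g,h) = (g·C(x), h·C(y))`. -/
noncomputable def psiMap (w : ↥Tset × (↥(Bgrp F) × ↥(Bgrp F))) :
    Submodule F (Vinf F) × Submodule F (Vinf F) :=
  (Submodule.map ((w.2.1 : (Vinf F) ≃ₗ[F] (Vinf F)) : (Vinf F) →ₗ[F] (Vinf F))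
      (coordSpan F w.1.1.1),
   Submodule.map ((w.2.2 : (Vinf F) ≃ₗ[F] (Vinf F)) : (Vinf F) →ₗ[F] (Vinf F))
      (coordSpan F w.1.1.2))


/-! Two subspaces lie in the same `B`-orbit exactly when they have the same symbol: an echelon basis
of `X` along the flag `V_0 ⊆ V_1 ⊆ ⋯` is triangular, so it extends to an element of `B` carrying
`C(Sym X)` onto `X`. Consequently `ψ⁻¹(U^n(X,Y))` is the product of `A(Sym X; Sym Y)` with the two
sets of those `g ∈ B` that carry `C(Sym X) ∩ V_n` onto `X ∩ V_n`, respectively `C(Sym Y) ∩ V_n` onto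
`Y ∩ V_n`. Such a set is a coset of a stabilizer, so by invariance its measure is the inverse of the
size of the `B`-orbit of `X ∩ V_n`. This orbit is a Schubert cell, whose points are counted by
induction on `n`: a subspace of `V_n` of dimension `d` has `q^(n-d)` extensions to a subspace of
`V_{n+1}` of dimension `d + 1` with the same intersection with `V_n`. -/

section Counting

theorem ncard_eq_mul_of_ncard_fiber {α β : Type*} {s : Set α} {t : Set β} {f : α → β} {c : ℕ}
    (hs : s.Finite) (ht : t.Finite) (hf : Set.MapsTo f s t)
    (hc : ∀ b ∈ t, {a ∈ s | f a = b}.ncard = c) : s.ncard = t.ncard * c := by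
  classical
  lift s to Finset α using hs
  lift t to Finset β using ht
  rw [Set.ncard_coe_finset, Set.ncard_coe_finset, Finset.card_eq_sum_card_fiberwise hf,
    Finset.sum_const_nat]
  intro b hb
  rw [← hc b hb, ← Set.ncard_coe_finset, Finset.coe_filter]
  rfl

theorem exists_perm_forall_mem_iff {α : Type*} {s : Finset α} {p q : α → Prop}
    [DecidablePred p] [DecidablePred q] (h : (s.filter p).card = (s.filter q).card) :
    ∃ σ : Equiv.Perm α, (∀ a ∉ s, σ a = a) ∧ ∀ a ∈ s, σ a ∈ s ∧ (q (σ a) ↔ p a) := by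
  classical
  have e : {a : s // p a} ≃ {a : s // q a} := by
    refine Fintype.equivOfCardEq ?_
    rw [Fintype.card_subtype, Fintype.card_subtype, ← Finset.card_map (.subtype _),
      ← Finset.card_map (s := Finset.univ.filter fun a : s => q a) (.subtype _)]
    convert h using 2 <;> ext a <;> simp [and_comm]
  refine ⟨Equiv.Perm.ofSubtype e.extendSubtype,
    fun a ha => Equiv.Perm.ofSubtype_apply_of_not_mem _ ha, fun a ha => ?_⟩
  rw [Equiv.Perm.ofSubtype_apply_of_mem _ ha]
  refine ⟨Subtype.prop _, ?_⟩
  by_cases hp : p a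
  · exact iff_of_true (e.extendSubtype_mem ⟨a, ha⟩ hp) hp
  · exact iff_of_false (e.extendSubtype_not_mem ⟨a, ha⟩ hp) hp

end Counting

section LinearAlgebra

open Module

variable {K E : Type*} [Field K] [AddCommGroup E] [Module K E] {ℓ : E →ₗ[K] K}

theorem inf_ker_sup_span_singleton {A : Submodule K E} {v : E} (hv : v ∈ A) (hℓ : ℓ v ≠ 0) :
    A ⊓ LinearMap.ker ℓ ⊔ K ∙ v = A := by
  rw [inf_comm, sup_comm, ← sup_inf_assoc_of_le _ ((Submodule.span_singleton_le_iff_mem v A).2 hv),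
    LinearMap.span_singleton_sup_ker_eq_top ℓ hℓ, top_inf_eq]

theorem finrank_inf_ker_add_one {A : Submodule K E} [FiniteDimensional K A]
    (hA : ¬ A ≤ LinearMap.ker ℓ) : finrank K ↥(A ⊓ LinearMap.ker ℓ) + 1 = finrank K A := by
  have hne : ℓ.domRestrict A ≠ 0 := fun h => hA fun v hv =>
    LinearMap.mem_ker.2 (DFunLike.congr_fun h ⟨v, hv⟩)
  rw [← Module.Dual.finrank_ker_add_one_of_ne_zero hne, ← Submodule.finrank_map_subtype_eq A,
    LinearMap.ker_domRestrict, Submodule.map_comap_subtype]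

theorem ncard_mem_apply_eq_one {A : Submodule K E} (hA : ¬ A ≤ LinearMap.ker ℓ) :
    {v ∈ (A : Set E) | ℓ v = 1}.ncard = Nat.card ↥(A ⊓ LinearMap.ker ℓ) := by
  obtain ⟨v, hv, hℓ⟩ := SetLike.not_le_iff_exists.1 hA
  have hℓ : ℓ v ≠ 0 := hℓ
  set u := (ℓ v)⁻¹ • v
  have hu : u ∈ A := A.smul_mem _ hv
  have hℓu : ℓ u = 1 := by simp [u, hℓ]
  have himage : {v ∈ (A : Set E) | ℓ v = 1} = (u + ·) '' (A ⊓ LinearMap.ker ℓ : Submodule K E) := by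
    ext w
    refine ⟨fun ⟨hw, hℓw⟩ => ⟨w - u, ⟨A.sub_mem hw hu, ?_⟩, add_sub_cancel u w⟩, ?_⟩
    · simp [hℓw, hℓu]
    · rintro ⟨z, ⟨hz, hℓz⟩, rfl⟩
      exact ⟨A.add_mem hu hz, by simp [hℓu, LinearMap.mem_ker.1 hℓz]⟩
  rw [himage, Set.ncard_image_of_injective _ (add_right_injective u)]
  rfl

theorem finite_setOf_submodule_le {R M : Type*} [Semiring R] [AddCommMonoid M] [Module R M]
    (U : Submodule R M) [Finite U] : {Z : Submodule R M | Z ≤ U}.Finite :=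
  Set.Finite.of_finite_image ((Set.toFinite (U : Set M)).finite_subsets.subset
    (Set.image_subset_iff.2 fun _ hZ => hZ)) SetLike.coe_injective.injOn

/-- Each such `Z` is `W ⊔ K ∙ v` for exactly `#W` vectors `v ∈ U` normalised by `ℓ v = 1`. -/
theorem card_inf_ker_eq_ncard_mul_card {U W : Submodule K E} [Finite U]
    (hW : W ≤ U ⊓ LinearMap.ker ℓ) (hU : ¬ U ≤ LinearMap.ker ℓ) :
    Nat.card ↥(U ⊓ LinearMap.ker ℓ) =
      {Z | Z ≤ U ∧ Z ⊓ LinearMap.ker ℓ = W ∧ ¬ Z ≤ LinearMap.ker ℓ}.ncard * Nat.card W := by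
  rw [← ncard_mem_apply_eq_one hU]
  have hspan : ∀ v, ℓ v = 1 → (W ⊔ K ∙ v) ⊓ LinearMap.ker ℓ = W := fun v hv => by
    have hWker : W ≤ LinearMap.ker ℓ := hW.trans inf_le_right
    have hdisj : Disjoint (K ∙ v) (LinearMap.ker ℓ) := by
      refine (Submodule.disjoint_span_singleton_of_notMem fun h => ?_).symm
      exact one_ne_zero (hv.symm.trans (LinearMap.mem_ker.1 h))
    rw [sup_inf_assoc_of_le _ hWker, hdisj.eq_bot, sup_bot_eq]
  refine ncard_eq_mul_of_ncard_fiber (f := fun v => W ⊔ K ∙ v) ((Set.toFinite (U : Set E)).sep _)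
    ((finite_setOf_submodule_le U).subset fun Z hZ => hZ.1) ?_ ?_
  · rintro v ⟨hvU, hv⟩
    refine ⟨sup_le (hW.trans inf_le_left) ((Submodule.span_singleton_le_iff_mem v U).2 hvU),
      hspan v hv, fun h => ?_⟩
    have hker : ℓ v = 0 := h (le_sup_right (a := W) (Submodule.mem_span_singleton_self v))
    exact one_ne_zero (hv.symm.trans hker)
  · rintro Z ⟨hZU, rfl, hZ⟩
    rw [← ncard_mem_apply_eq_one hZ]
    congr 1
    ext v
    constructor
    · rintro ⟨⟨-, hv⟩, hvZ⟩
      refine ⟨?_, hv⟩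
      rw [← hvZ]
      exact le_sup_right (a := Z ⊓ _) (Submodule.mem_span_singleton_self v)
    · rintro ⟨hvZ, hv⟩
      exact ⟨⟨hZU hvZ, hv⟩, inf_ker_sup_span_singleton hvZ (hv ▸ one_ne_zero)⟩

theorem bijective_of_map_eq {ι : Type*} {p : ι → Submodule K E} [∀ i, FiniteDimensional K (p i)]
    {f : E →ₗ[K] E} (hf : ∀ i, (p i).map f = p i) (hp : ∀ v, ∃ i, v ∈ p i) :
    Function.Bijective f := by
  refine ⟨(injective_iff_map_eq_zero f).2 fun v hv => ?_, fun v => ?_⟩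
  · obtain ⟨i, hi⟩ := hp v
    have hmaps : ∀ u ∈ p i, f u ∈ p i := fun u hu => (hf i).le (Submodule.mem_map_of_mem hu)
    have hsurj : Function.Surjective (f.restrict hmaps) := by
      rintro ⟨w, hw⟩
      obtain ⟨u, hu, rfl⟩ := (hf i).ge hw
      exact ⟨⟨u, hu⟩, rfl⟩
    have hv0 : (⟨v, hi⟩ : p i) = 0 :=
      LinearMap.injective_iff_surjective.2 hsurj (Subtype.ext (hv.trans (map_zero f).symm))
    exact congrArg Subtype.val hv0
  · obtain ⟨i, hi⟩ := hp v
    obtain ⟨u, -, hu⟩ := (hf i).ge hi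
    exact ⟨u, hu⟩

end LinearAlgebra

section Flag

open Module

variable {K : Type} [Field K]

theorem Vn_eq_supported (n : ℕ) : Vn K n = Finsupp.supported K K (Set.Iio n) := by
  ext v
  rw [Finsupp.mem_supported']
  exact forall_congr' fun i => by rw [Set.mem_Iio, not_lt]

theorem coordSpan_eq_supported (x : ℕ → Bool) :
    coordSpan K x = Finsupp.supported K K {i | x i = true} :=
  (Finsupp.supported_eq_span_single K _).symm

theorem Vn_mono : Monotone (Vn K) :=
  fun _ _ h _ hv i hi => hv i (h.trans hi)

theorem exists_mem_Vn (v : Vinf K) : ∃ n, v ∈ Vn K n := by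
  obtain ⟨n, hn⟩ := v.support.exists_nat_subset_range
  exact ⟨n, fun i hi => Finsupp.notMem_support_iff.1 fun h => hi.not_gt (Finset.mem_range.1 (hn h))⟩

instance (n : ℕ) : FiniteDimensional K (Vn K n) := by
  rw [Vn_eq_supported]
  exact Module.Finite.equiv (Finsupp.supportedEquivFinsupp (Set.Iio n)).symm

instance (X : Submodule K (Vinf K)) (n : ℕ) : FiniteDimensional K ↥(X ⊓ Vn K n) :=
  Submodule.finiteDimensional_of_le inf_le_right

theorem finrank_Vn (n : ℕ) : finrank K (Vn K n) = n := by
  rw [Vn_eq_supported, (Finsupp.supportedEquivFinsupp (Set.Iio n)).finrank_eq, finrank_finsupp_self]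
  simp

theorem Vn_zero : Vn K 0 = ⊥ :=
  Submodule.finrank_eq_zero.1 (finrank_Vn 0)

theorem inf_Vn_inf_Vn {m n : ℕ} (h : m ≤ n) (X : Submodule K (Vinf K)) :
    X ⊓ Vn K n ⊓ Vn K m = X ⊓ Vn K m := by
  rw [inf_assoc, inf_eq_right.2 (Vn_mono h)]

theorem Vn_succ_inf_ker_lapply (n : ℕ) :
    Vn K (n + 1) ⊓ LinearMap.ker (Finsupp.lapply n) = Vn K n := by
  ext v
  refine ⟨fun ⟨hv, hvn⟩ i hi => ?_, fun hv => ⟨Vn_mono n.le_succ hv, hv n le_rfl⟩⟩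
  rcases hi.eq_or_lt with rfl | hi
  exacts [hvn, hv i hi]

theorem inf_ker_lapply {Z : Submodule K (Vinf K)} {n : ℕ} (hZ : Z ≤ Vn K (n + 1)) :
    Z ⊓ LinearMap.ker (Finsupp.lapply n) = Z ⊓ Vn K n := by
  rw [← Vn_succ_inf_ker_lapply, ← inf_assoc, inf_eq_left.2 hZ]

theorem le_ker_lapply_iff {Z : Submodule K (Vinf K)} {n : ℕ} (hZ : Z ≤ Vn K (n + 1)) :
    Z ≤ LinearMap.ker (Finsupp.lapply n) ↔ Z ≤ Vn K n := by
  rw [← inf_eq_left, inf_ker_lapply hZ, inf_eq_left]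

theorem finrank_inf_Vn_succ (X : Submodule K (Vinf K)) (n : ℕ)
    [Decidable (X ⊓ Vn K (n + 1) ≤ Vn K n)] :
    finrank K ↥(X ⊓ Vn K (n + 1)) =
      finrank K ↥(X ⊓ Vn K n) + if X ⊓ Vn K (n + 1) ≤ Vn K n then 0 else 1 := by
  have hinf := inf_Vn_inf_Vn n.le_succ X
  split_ifs with h
  · rw [← hinf, inf_eq_left.2 h, add_zero]
  · rw [← le_ker_lapply_iff inf_le_right] at h
    rw [← finrank_inf_ker_add_one h, inf_ker_lapply inf_le_right, hinf]

end Flag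

section Symbol

open Module

variable {K : Type} [Field K]

/-- The symbol `Sym(X)` of a subspace as a 0–1 sequence, with the 0-based indexing of `symInc`. -/
noncomputable def symbol (X : Submodule K (Vinf K)) (k : ℕ) : Bool :=
  decide (symInc K X k = 1)

theorem symbol_eq_true_iff {X : Submodule K (Vinf K)} {k : ℕ} :
    symbol X k = true ↔ ¬ X ⊓ Vn K (k + 1) ≤ Vn K k := by
  classical
  rw [symbol, decide_eq_true_iff, symInc, finrank_inf_Vn_succ, Nat.add_sub_cancel_left]
  split_ifs with h <;> simp [h]

theorem finrank_inf_Vn_add_symInc (X : Submodule K (Vinf K)) (k : ℕ) :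
    finrank K ↥(X ⊓ Vn K k) + symInc K X k = finrank K ↥(X ⊓ Vn K (k + 1)) :=
  Nat.add_sub_of_le
    (Submodule.finrank_mono (inf_le_inf_left X (Vn_mono k.le_succ)))

theorem symInc_eq_ite (X : Submodule K (Vinf K)) (k : ℕ) :
    symInc K X k = if symbol X k = true then 1 else 0 := by
  classical
  simp only [symInc, finrank_inf_Vn_succ, Nat.add_sub_cancel_left, symbol_eq_true_iff, ite_not]

theorem finrank_inf_Vn (X : Submodule K (Vinf K)) (n : ℕ) :
    finrank K ↥(X ⊓ Vn K n) = Nat.count (symbol X · = true) n := by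
  induction n with
  | zero => rw [Vn_zero, inf_bot_eq, finrank_bot, Nat.count_zero]
  | succ n ih => rw [← finrank_inf_Vn_add_symInc, ih, symInc_eq_ite, Nat.count_succ]

theorem finrank_inf_Vn_le (X : Submodule K (Vinf K)) (n : ℕ) : finrank K ↥(X ⊓ Vn K n) ≤ n :=
  (finrank_inf_Vn X n).trans_le (Nat.count_le _)

theorem symbol_congr {X Y : Submodule K (Vinf K)} {k : ℕ}
    (h : finrank K ↥(X ⊓ Vn K k) = finrank K ↥(Y ⊓ Vn K k))
    (hsucc : finrank K ↥(X ⊓ Vn K (k + 1)) = finrank K ↥(Y ⊓ Vn K (k + 1))) :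
    symbol X k = symbol Y k := by
  rw [symbol, symbol, symInc, symInc, h, hsucc]

theorem symbol_coordSpan (x : ℕ → Bool) : symbol (coordSpan K x) = x := by
  ext k
  rw [Bool.eq_iff_iff, symbol_eq_true_iff, coordSpan_eq_supported, Vn_eq_supported, Vn_eq_supported,
    ← Finsupp.supported_inter]
  refine ⟨fun h => of_not_not fun hk => h (Finsupp.supported_mono fun i hi => ?_), fun hk h => ?_⟩
  · exact (Nat.lt_succ_iff_lt_or_eq.1 hi.2).resolve_right fun hik => hk (hik ▸ hi.1)
  · have hmem := h (Finsupp.single_mem_supported K (1 : K) ⟨hk, k.lt_succ_self⟩)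
    exact one_ne_zero (Finsupp.single_eq_same.symm.trans
      ((Finsupp.mem_supported' K _).1 hmem k (lt_irrefl k)))

theorem symbol_inf_Vn (X : Submodule K (Vinf K)) (n k : ℕ) :
    symbol (X ⊓ Vn K n) k = (decide (k < n) && symbol X k) := by
  rw [Bool.eq_iff_iff, Bool.and_eq_true, decide_eq_true_iff, symbol_eq_true_iff, symbol_eq_true_iff]
  by_cases hk : k < n
  · rw [inf_Vn_inf_Vn hk, and_iff_right hk]
  · have hle : X ⊓ Vn K n ⊓ Vn K (k + 1) ≤ Vn K k :=
      inf_le_left.trans (inf_le_right.trans (Vn_mono (not_lt.1 hk)))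
    exact iff_of_false (not_not.2 hle) fun h => hk h.1

theorem symbol_inf_Vn_eq_iff {X Y : Submodule K (Vinf K)} {n : ℕ} :
    symbol (X ⊓ Vn K n) = symbol (Y ⊓ Vn K n) ↔ ∀ k < n, symbol X k = symbol Y k := by
  simp only [funext_iff, symbol_inf_Vn]
  refine forall_congr' fun k => ?_
  by_cases hk : k < n <;> simp [hk]

theorem eq_of_le_of_symbol_eq {X Y : Submodule K (Vinf K)} (hle : X ≤ Y)
    (h : symbol X = symbol Y) : X = Y := by
  refine hle.antisymm fun v hv => ?_
  obtain ⟨n, hn⟩ := exists_mem_Vn v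
  have hinf : X ⊓ Vn K n = Y ⊓ Vn K n :=
    Submodule.eq_of_le_of_finrank_eq (inf_le_inf_right _ hle) (by simp only [finrank_inf_Vn, h])
  exact (hinf.ge ⟨hv, hn⟩).1

end Symbol

section BorelAction

open Module
open scoped Pointwise

variable {K : Type} [Field K]

theorem smul_Vn (g : Bgrp K) (n : ℕ) : g • Vn K n = Vn K n :=
  g.2 n

theorem smul_inf_Vn (g : Bgrp K) (X : Submodule K (Vinf K)) (n : ℕ) :
    g • X ⊓ Vn K n = g • (X ⊓ Vn K n) := by
  conv_lhs => rw [← smul_Vn g n]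
  exact (Submodule.map_inf _ (g : Vinf K ≃ₗ[K] Vinf K).injective).symm

theorem finrank_smul (g : Bgrp K) (X : Submodule K (Vinf K)) : finrank K ↥(g • X) = finrank K X :=
  LinearEquiv.finrank_map_eq (g : Vinf K ≃ₗ[K] Vinf K) X

theorem symbol_smul (g : Bgrp K) (X : Submodule K (Vinf K)) : symbol (g • X) = symbol X :=
  funext fun _ => symbol_congr (by rw [smul_inf_Vn, finrank_smul])
    (by rw [smul_inf_Vn, finrank_smul])

theorem single_mem_Vn {i n : ℕ} (h : i < n) (c : K) : Finsupp.single i c ∈ Vn K n := by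
  rw [Vn_eq_supported]
  exact Finsupp.single_mem_supported K c h

theorem Vn_sup_span_singleton {n : ℕ} {v : Vinf K} (hv : v ∈ Vn K (n + 1)) (hvn : v n ≠ 0) :
    Vn K n ⊔ K ∙ v = Vn K (n + 1) := by
  rw [← Vn_succ_inf_ker_lapply]
  exact inf_ker_sup_span_singleton hv hvn

theorem map_linearCombination_Vn {z : ℕ → Vinf K} (hz : ∀ i, z i ∈ Vn K (i + 1))
    (hzi : ∀ i, z i i ≠ 0) (n : ℕ) : (Vn K n).map (Finsupp.linearCombination K z) = Vn K n := by
  induction n with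
  | zero => rw [Vn_zero, Submodule.map_bot]
  | succ n ih =>
    have hsingle : Vn K n ⊔ K ∙ Finsupp.single n 1 = Vn K (n + 1) :=
      Vn_sup_span_singleton (single_mem_Vn n.lt_succ_self 1) (by simp)
    rw [← hsingle, Submodule.map_sup, ih, Submodule.map_span, Set.image_singleton,
      Finsupp.linearCombination_single, one_smul, hsingle, Vn_sup_span_singleton (hz n) (hzi n)]

theorem exists_smul_single_eq {z : ℕ → Vinf K} (hz : ∀ i, z i ∈ Vn K (i + 1))
    (hzi : ∀ i, z i i ≠ 0) : ∃ g : Bgrp K, ∀ i, g • Finsupp.single i (1 : K) = z i := by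
  have hmap := map_linearCombination_Vn hz hzi
  have hbij := bijective_of_map_eq hmap exists_mem_Vn
  refine ⟨⟨LinearEquiv.ofBijective (Finsupp.linearCombination K z) hbij, hmap⟩, fun i => ?_⟩
  exact (Finsupp.linearCombination_single K 1 i).trans (one_smul K _)

theorem exists_smul_coordSpan_symbol_eq (X : Submodule K (Vinf K)) :
    ∃ g : Bgrp K, g • coordSpan K (symbol X) = X := by
  have hechelon (i : ℕ) : ∃ v : Vinf K,
      v ∈ Vn K (i + 1) ∧ v i ≠ 0 ∧ (symbol X i = true → v ∈ X) := by
    by_cases hi : symbol X i = true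
    · rw [symbol_eq_true_iff, ← le_ker_lapply_iff inf_le_right] at hi
      obtain ⟨v, ⟨hvX, hv⟩, hvi⟩ := SetLike.not_le_iff_exists.1 hi
      exact ⟨v, hv, hvi, fun _ => hvX⟩
    · exact ⟨Finsupp.single i 1, single_mem_Vn i.lt_succ_self 1, by simp, fun h => absurd h hi⟩
  choose z hz hzi hzX using hechelon
  obtain ⟨g, hg⟩ := exists_smul_single_eq hz hzi
  refine ⟨g, eq_of_le_of_symbol_eq ?_ ?_⟩
  · refine (Submodule.map_span_le _ _ _).2 ?_
    rintro _ ⟨i, hi, rfl⟩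
    change g • Finsupp.single i 1 ∈ X
    exact (hg i).symm ▸ hzX i hi
  · rw [symbol_smul, symbol_coordSpan]

theorem mem_orbit_iff_symbol_eq {X Y : Submodule K (Vinf K)} :
    Y ∈ MulAction.orbit (Bgrp K) X ↔ symbol Y = symbol X := by
  constructor
  · rintro ⟨g, rfl⟩
    exact symbol_smul g X
  · intro h
    obtain ⟨g, hg⟩ := exists_smul_coordSpan_symbol_eq X
    obtain ⟨g', hg'⟩ := exists_smul_coordSpan_symbol_eq Y
    refine MulAction.mem_orbit_iff.2 ⟨g' * g⁻¹, ?_⟩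
    rw [mul_smul, inv_smul_eq_iff.2 hg.symm, ← h, hg']

end BorelAction

section SchubertCell

open Module
open scoped Pointwise

variable {K : Type} [Field K]

/-- The dimension of the Schubert cell of `X ∩ V_n`, i.e. of its orbit under `B`: an echelon basis
vector with leading entry in position `k` has a free entry in each of the `k - dim (X ∩ V_k)`
earlier positions that are not leading. -/
noncomputable def cellDim (X : Submodule K (Vinf K)) (n : ℕ) : ℕ :=
  ∑ k ∈ Finset.range n, symInc K X k * (k - finrank K ↥(X ⊓ Vn K k))

theorem finrank_mul_add_two_mul_cellDim (X : Submodule K (Vinf K)) (n : ℕ) :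
    finrank K ↥(X ⊓ Vn K n) * (finrank K ↥(X ⊓ Vn K n) + 1) + 2 * cellDim X n =
      2 * ∑ k ∈ Finset.range n, (k + 1) * symInc K X k := by
  induction n with
  | zero => simp [cellDim, Vn_zero]
  | succ n ih =>
    rw [cellDim] at ih ⊢
    rw [Finset.sum_range_succ, Finset.sum_range_succ, mul_add 2, mul_add 2, ← ih,
      ← finrank_inf_Vn_add_symInc, symInc_eq_ite X n]
    obtain ⟨c, hc⟩ := Nat.exists_eq_add_of_le (finrank_inf_Vn_le X n)
    set m := finrank K ↥(X ⊓ Vn K n)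
    have hsub : n - m = c := by lia
    split_ifs
    · rw [hsub, hc]
      ring
    · ring

theorem finrank_mul_sub_sum_symInc_eq_neg_cellDim {X Y : Submodule K (Vinf K)} {n : ℕ}
    (h : finrank K ↥(X ⊓ Vn K n) = finrank K ↥(Y ⊓ Vn K n)) :
    ((finrank K ↥(X ⊓ Vn K n) * (finrank K ↥(X ⊓ Vn K n) + 1) : ℕ) : ℤ) -
        ∑ k ∈ Finset.range n, ((k : ℤ) + 1) * ((symInc K X k : ℤ) + (symInc K Y k : ℤ)) =
      -(cellDim X n : ℤ) + -(cellDim Y n : ℤ) := by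
  have hX := finrank_mul_add_two_mul_cellDim X n
  have hY := finrank_mul_add_two_mul_cellDim Y n
  rw [← h] at hY
  simp only [mul_add, Finset.sum_add_distrib]
  zify at hX hY
  push_cast
  linarith

theorem le_Vn_of_mem_orbit {X Z : Submodule K (Vinf K)} {n : ℕ}
    (hZ : Z ∈ MulAction.orbit (Bgrp K) (X ⊓ Vn K n)) : Z ≤ Vn K n := by
  obtain ⟨g, rfl⟩ := hZ
  exact (smul_inf_Vn g X n).ge.trans inf_le_right

theorem mem_orbit_inf_Vn_succ_iff {X Z : Submodule K (Vinf K)} {n : ℕ} :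
    Z ∈ MulAction.orbit (Bgrp K) (X ⊓ Vn K (n + 1)) ↔ Z ≤ Vn K (n + 1) ∧
      Z ⊓ Vn K n ∈ MulAction.orbit (Bgrp K) (X ⊓ Vn K n) ∧ symbol Z n = symbol X n := by
  by_cases hZ : Z ≤ Vn K (n + 1)
  · nth_rw 1 [and_iff_right hZ, ← inf_eq_left.2 hZ]
    simp only [mem_orbit_iff_symbol_eq, symbol_inf_Vn_eq_iff, Nat.forall_lt_succ_right]
  · exact iff_of_false (mt le_Vn_of_mem_orbit hZ) fun h => hZ h.1

variable [Finite K]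

instance (n : ℕ) : Finite (Vn K n) :=
  Module.finite_of_finite K

theorem finite_orbit_inf_Vn (X : Submodule K (Vinf K)) (n : ℕ) :
    (MulAction.orbit (Bgrp K) (X ⊓ Vn K n)).Finite :=
  (finite_setOf_submodule_le (Vn K n)).subset fun _ => le_Vn_of_mem_orbit

theorem ncard_setOf_inf_Vn_eq {W : Submodule K (Vinf K)} {n : ℕ} (hW : W ≤ Vn K n) :
    {Z | Z ≤ Vn K (n + 1) ∧ Z ⊓ Vn K n = W ∧ ¬ Z ≤ Vn K n}.ncard =
      Nat.card K ^ (n - finrank K W) := by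
  have hWker : W ≤ Vn K (n + 1) ⊓ LinearMap.ker (Finsupp.lapply n) :=
    hW.trans (Vn_succ_inf_ker_lapply n).ge
  have hnot : ¬ Vn K (n + 1) ≤ LinearMap.ker (Finsupp.lapply n) := by
    rw [le_ker_lapply_iff le_rfl]
    intro h
    have hdim := Submodule.finrank_mono h
    rw [finrank_Vn, finrank_Vn] at hdim
    exact n.lt_succ_self.not_ge hdim
  have hset : {Z | Z ≤ Vn K (n + 1) ∧ Z ⊓ Vn K n = W ∧ ¬ Z ≤ Vn K n} =
      {Z | Z ≤ Vn K (n + 1) ∧ Z ⊓ LinearMap.ker (Finsupp.lapply n) = W ∧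
        ¬ Z ≤ LinearMap.ker (Finsupp.lapply n)} :=
    Set.ext fun Z => and_congr_right fun hZ => by rw [inf_ker_lapply hZ, le_ker_lapply_iff hZ]
  have hfinite : FiniteDimensional K W := Submodule.finiteDimensional_of_le hW
  have hle : finrank K W ≤ n := (Submodule.finrank_mono hW).trans_eq (finrank_Vn n)
  have hcard := card_inf_ker_eq_ncard_mul_card hWker hnot
  rw [Vn_succ_inf_ker_lapply, ← hset, Module.natCard_eq_pow_finrank (K := K),
    Module.natCard_eq_pow_finrank (K := K) (V := W), finrank_Vn, ← pow_sub_mul_pow _ hle] at hcard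
  exact (Nat.eq_of_mul_eq_mul_right (pow_pos Nat.card_pos _) hcard).symm

theorem ncard_orbit_inf_Vn_succ {X : Submodule K (Vinf K)} {n : ℕ} (hn : symbol X n = true) :
    (MulAction.orbit (Bgrp K) (X ⊓ Vn K (n + 1))).ncard =
      (MulAction.orbit (Bgrp K) (X ⊓ Vn K n)).ncard *
        Nat.card K ^ (n - finrank K ↥(X ⊓ Vn K n)) := by
  refine ncard_eq_mul_of_ncard_fiber (f := (· ⊓ Vn K n)) (finite_orbit_inf_Vn X _)
    (finite_orbit_inf_Vn X n) (fun Z hZ => (mem_orbit_inf_Vn_succ_iff.1 hZ).2.1) fun W hW => ?_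
  have hfinrank : finrank K W = finrank K ↥(X ⊓ Vn K n) := by
    obtain ⟨g, rfl⟩ := hW
    exact finrank_smul g _
  rw [← hfinrank, ← ncard_setOf_inf_Vn_eq (le_Vn_of_mem_orbit hW)]
  congr 1
  ext Z
  simp only [Set.mem_ofPred_eq, mem_orbit_inf_Vn_succ_iff, hn, symbol_eq_true_iff, and_assoc]
  refine and_congr_right fun hZ => ?_
  rw [inf_eq_left.2 hZ]
  exact ⟨fun h => ⟨h.2.2, h.2.1⟩, fun h => ⟨h.1 ▸ hW, h.2, h.1⟩⟩

theorem ncard_orbit_inf_Vn (X : Submodule K (Vinf K)) (n : ℕ) :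
    (MulAction.orbit (Bgrp K) (X ⊓ Vn K n)).ncard = Nat.card K ^ cellDim X n := by
  induction n with
  | zero =>
    have hsub : MulAction.orbit (Bgrp K) (X ⊓ Vn K 0) ⊆ {X ⊓ Vn K 0} := fun Z hZ => by
      have hZ0 := le_Vn_of_mem_orbit hZ
      rw [Vn_zero, le_bot_iff] at hZ0
      rw [hZ0, Vn_zero, inf_bot_eq]
      rfl
    rw [hsub.antisymm (Set.singleton_subset_iff.2 (MulAction.mem_orbit_self _)),
      Set.ncard_singleton, cellDim, Finset.sum_range_zero, pow_zero]
  | succ n ih =>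
    rw [cellDim, Finset.sum_range_succ, ← cellDim, symInc_eq_ite]
    split_ifs with hn
    · rw [one_mul, pow_add, ← ih, ncard_orbit_inf_Vn_succ hn]
    · have hX : X ⊓ Vn K (n + 1) ≤ Vn K n := of_not_not (mt symbol_eq_true_iff.2 hn)
      rw [zero_mul, add_zero, ← ih, ← inf_Vn_inf_Vn n.le_succ X, inf_eq_left.2 hX]

end SchubertCell

section HaarMeasure

open scoped Pointwise ENNReal

theorem measure_setOf_smul_eq {G α : Type*} [Group G] [MeasurableSpace G] [MeasurableMul G]
    [MulAction G α] {μ : Measure G} [IsProbabilityMeasure μ] [μ.IsMulLeftInvariant] {a b : α}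
    (hb : b ∈ MulAction.orbit G a) (hfinite : (MulAction.orbit G a).Finite)
    (hmeas : MeasurableSet (MulAction.stabilizer G a : Set G)) :
    μ {g | g • a = b} = ((MulAction.orbit G a).ncard : ℝ≥0∞)⁻¹ := by
  obtain ⟨h, rfl⟩ := hb
  have hncard : (MulAction.orbit G a).ncard ≠ 0 :=
    (Set.ncard_pos hfinite).2 (MulAction.nonempty_orbit a) |>.ne'
  have hindex : (MulAction.stabilizer G a).FiniteIndex :=
    Subgroup.finiteIndex_iff.2 (MulAction.index_stabilizer G a ▸ hncard)
  have hset : {g | g • a = h • a} = (h⁻¹ * ·) ⁻¹' (MulAction.stabilizer G a : Set G) := by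
    ext g
    simp only [Set.mem_preimage, SetLike.mem_coe, MulAction.mem_stabilizer_iff, mul_smul,
      inv_smul_eq_iff, Set.mem_ofPred_eq]
  have hmul := Subgroup.index_mul_measure _ hmeas μ
  rw [MulAction.index_stabilizer, measure_univ] at hmul
  rw [hset, measure_preimage_mul, ENNReal.eq_inv_of_mul_eq_one_left ((mul_comm _ _).trans hmul)]

variable {K : Type} [Field K]

theorem measurableSet_setOf_smul_mem [Countable K] (v : Vinf K) (S : Set (Vinf K)) :
    MeasurableSet {g : Bgrp K | g • v ∈ S} := by
  induction v using Finsupp.induction_linear generalizing S with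
  | zero => simp only [smul_zero, MeasurableSet.const]
  | add u w hu hw =>
    have hset : {g : Bgrp K | g • (u + w) ∈ S} =
        ⋃ z : Vinf K, {g | g • u ∈ ({z} : Set _)} ∩ {g | g • w ∈ (z + ·) ⁻¹' S} := by
      ext g
      simp [smul_add]
    rw [hset]
    exact .iUnion fun z => (hu _).inter (hw _)
  | single i c =>
    refine ⟨(fun f => f i) ⁻¹' ((c • ·) ⁻¹' S), ?_, ?_⟩
    · let : MeasurableSpace (Vinf K) := ⊤
      exact measurable_pi_apply i trivial
    · ext g
      have hsmul : g • Finsupp.single i c = c • (g : Vinf K ≃ₗ[K] Vinf K) (Finsupp.single i 1) := by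
        rw [← map_smul, Finsupp.smul_single_one]
        rfl
      exact (congrArg (· ∈ S) hsmul).symm.to_iff

instance [Countable K] : MeasurableMul (Bgrp K) where
  measurable_const_mul c := by
    let : MeasurableSpace (Vinf K) := ⊤
    refine measurable_comap_iff.2 (measurable_pi_iff.2 fun i S _ => ?_)
    exact measurableSet_setOf_smul_mem (Finsupp.single i 1) ((c • ·) ⁻¹' S)
  measurable_mul_const c := by
    let : MeasurableSpace (Vinf K) := ⊤
    refine measurable_comap_iff.2 (measurable_pi_iff.2 fun i S _ => ?_)
    exact measurableSet_setOf_smul_mem (c • Finsupp.single i 1) S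

theorem measurableSet_stabilizer [Countable K] (W : Submodule K (Vinf K)) [FiniteDimensional K W] :
    MeasurableSet (MulAction.stabilizer (Bgrp K) W : Set (Bgrp K)) := by
  have hset : (MulAction.stabilizer (Bgrp K) W : Set (Bgrp K)) =
      ⋂ w ∈ (W : Set (Vinf K)), {g | g • w ∈ (W : Set (Vinf K))} := by
    ext g
    simp only [SetLike.mem_coe, MulAction.mem_stabilizer_iff, Set.mem_iInter, Set.mem_ofPred_eq]
    refine ⟨fun h w hw => h.le (Submodule.smul_mem_pointwise_smul w g W hw), fun h => ?_⟩
    exact Submodule.eq_of_le_of_finrank_eq (Submodule.map_le_iff_le_comap.2 h) (finrank_smul g W)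
  rw [hset]
  exact .biInter (Set.to_countable _) fun w _ => measurableSet_setOf_smul_mem w _

theorem measure_setOf_smul_inf_Vn_eq [Finite K] {μ : Measure (Bgrp K)} [IsProbabilityMeasure μ]
    [μ.IsMulLeftInvariant] (X : Submodule K (Vinf K)) (n : ℕ) :
    μ {g | g • (coordSpan K (symbol X) ⊓ Vn K n) = X ⊓ Vn K n} =
      ENNReal.ofReal ((Nat.card K : ℝ) ^ (-(cellDim X n : ℤ))) := by
  have hmem : X ⊓ Vn K n ∈ MulAction.orbit (Bgrp K) (coordSpan K (symbol X) ⊓ Vn K n) := by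
    rw [mem_orbit_iff_symbol_eq, symbol_inf_Vn_eq_iff, symbol_coordSpan]
    exact fun _ _ => rfl
  rw [measure_setOf_smul_eq hmem (finite_orbit_inf_Vn _ n) (measurableSet_stabilizer _),
    ← MulAction.orbit_eq_iff.2 hmem, ncard_orbit_inf_Vn, zpow_neg, zpow_natCast, ← Nat.cast_pow,
    ENNReal.ofReal_inv_of_pos (mod_cast pow_pos Nat.card_pos _), ENNReal.ofReal_natCast]

end HaarMeasure

section BasicSets

open Module
open scoped Pointwise

theorem map_domLCongr_supported {R M α β : Type*} [Semiring R] [AddCommMonoid M] [Module R M]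
    (e : α ≃ β) (t : Set β) :
    (Finsupp.supported M R (e ⁻¹' t)).map (Finsupp.domLCongr (M := M) (R := R) e).toLinearMap =
      Finsupp.supported M R t := by
  have hmap : (Finsupp.domLCongr (M := M) (R := R) e).toLinearMap = Finsupp.lmapDomain M R e :=
    LinearMap.ext fun v => Finsupp.equivMapDomain_eq_mapDomain e v
  rw [hmap, Finsupp.lmapDomain_supported, Set.image_preimage_eq t e.surjective]

theorem count_eq_count_of_le {p q : ℕ → Prop} [DecidablePred p] [DecidablePred q] {n k : ℕ}
    (hcount : Nat.count p n = Nat.count q n) (htail : ∀ i, n ≤ i → (p i ↔ q i)) (hk : n ≤ k) :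
    Nat.count p k = Nat.count q k := by
  induction k, hk using Nat.le_induction with
  | base => exact hcount
  | succ k hk ih => simp only [Nat.count_succ, ih, htail k hk]

theorem trueCount_eq_count (x : ℕ → Bool) (n : ℕ) :
    trueCount (fun k : Fin n => x k) = Nat.count (x · = true) n := by
  rw [trueCount, Nat.count_eq_card_filter_range, Finset.card_filter, Finset.card_filter,
    Finset.sum_range]

variable {K : Type} [Field K]

theorem coordSpan_inf_Vn_congr {x y : ℕ → Bool} {n : ℕ} (h : ∀ k < n, x k = y k) :
    coordSpan K x ⊓ Vn K n = coordSpan K y ⊓ Vn K n := by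
  simp only [coordSpan_eq_supported, Vn_eq_supported, ← Finsupp.supported_inter]
  congr 1
  ext k
  exact and_congr_left fun hk => by rw [Set.mem_ofPred_eq, Set.mem_ofPred_eq, h k hk]

theorem finrank_smul_coordSpan_inf_Vn (g : Bgrp K) (x : ℕ → Bool) (n : ℕ) :
    finrank K ↥(g • coordSpan K x ⊓ Vn K n) = Nat.count (x · = true) n := by
  rw [finrank_inf_Vn, symbol_smul, symbol_coordSpan]

theorem smul_coordSpan_inf_Vn_eq_iff {x : ℕ → Bool} {g : Bgrp K} {X : Submodule K (Vinf K)}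
    {n : ℕ} :
    g • coordSpan K x ⊓ Vn K n = X ⊓ Vn K n ↔
      (∀ k < n, x k = symbol X k) ∧ g • (coordSpan K (symbol X) ⊓ Vn K n) = X ⊓ Vn K n := by
  have hsymbol (h : g • coordSpan K x ⊓ Vn K n = X ⊓ Vn K n) : ∀ k < n, x k = symbol X k := by
    have := symbol_inf_Vn_eq_iff.1 (congrArg symbol h)
    rwa [symbol_smul, symbol_coordSpan] at this
  rw [← and_iff_right_of_imp hsymbol]
  refine and_congr_right fun hx => ?_
  rw [smul_inf_Vn, coordSpan_inf_Vn_congr hx]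

theorem exists_mem_GLBgrp_map_coordSpan_eq {x y : ℕ → Bool} {n : ℕ}
    (hcount : Nat.count (x · = true) n = Nat.count (y · = true) n)
    (htail : ∀ k, n ≤ k → x k = y k) :
    ∃ p ∈ GLBgrp K, (coordSpan K x).map (p : Vinf K →ₗ[K] Vinf K) = coordSpan K y := by
  rw [Nat.count_eq_card_filter_range, Nat.count_eq_card_filter_range] at hcount
  obtain ⟨σ, hfix, hσ⟩ := exists_perm_forall_mem_iff hcount
  refine ⟨Finsupp.domLCongr σ, ⟨n, fun k hk => ?_⟩, ?_⟩
  · have hpre : σ ⁻¹' Set.Iio k = Set.Iio k := by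
      ext i
      by_cases hi : i ∈ Finset.range n
      · exact iff_of_true ((Finset.mem_range.1 (hσ i hi).1).trans_le hk)
          ((Finset.mem_range.1 hi).trans_le hk)
      · rw [Set.mem_preimage, hfix i hi]
    have hmap := map_domLCongr_supported (R := K) (M := K) σ (Set.Iio k)
    rwa [hpre, ← Vn_eq_supported] at hmap
  · have hpre : σ ⁻¹' {i | y i = true} = {i | x i = true} := by
      ext i
      by_cases hi : i ∈ Finset.range n
      · exact (hσ i hi).2
      · rw [Set.mem_preimage, hfix i hi, Set.mem_ofPred_eq, Set.mem_ofPred_eq,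
          htail i (not_lt.1 (mt Finset.mem_range.2 hi))]
    have hmap := map_domLCongr_supported (R := K) (M := K) σ {i | y i = true}
    rwa [hpre, ← coordSpan_eq_supported, ← coordSpan_eq_supported] at hmap

theorem Bgrp_le_GLBgrp : Bgrp K ≤ GLBgrp K :=
  fun _ hg => ⟨0, fun n _ => hg n⟩

theorem exists_mem_GLBgrp_map_smul_eq {X Y : Submodule K (Vinf K)}
    (hXY : ∃ p ∈ GLBgrp K, X.map (p : Vinf K →ₗ[K] Vinf K) = Y) (g h : Bgrp K) :
    ∃ p ∈ GLBgrp K, (g • X).map (p : Vinf K →ₗ[K] Vinf K) = h • Y := by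
  obtain ⟨p, hp, rfl⟩ := hXY
  refine ⟨h * p * (g : Vinf K ≃ₗ[K] Vinf K)⁻¹, mul_mem (mul_mem (Bgrp_le_GLBgrp h.2) hp)
    (inv_mem (Bgrp_le_GLBgrp g.2)), ?_⟩
  change ((h : Vinf K ≃ₗ[K] Vinf K) * p * (g : Vinf K ≃ₗ[K] Vinf K)⁻¹) •
    (g : Vinf K ≃ₗ[K] Vinf K) • X = (h : Vinf K ≃ₗ[K] Vinf K) • p • X
  rw [mul_smul, inv_smul_smul, mul_smul]

theorem psiMap_preimage_Upair {n : ℕ} {X Y : Submodule K (Vinf K)}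
    (hdim : finrank K ↥(X ⊓ Vn K n) = finrank K ↥(Y ⊓ Vn K n)) :
    psiMap K ⁻¹' Upair K n X Y =
      Aset n (fun k => symbol X k) (fun k => symbol Y k) ×ˢ
        {g | g • (coordSpan K (symbol X) ⊓ Vn K n) = X ⊓ Vn K n} ×ˢ
        {h | h • (coordSpan K (symbol Y) ⊓ Vn K n) = Y ⊓ Vn K n} := by
  ext ⟨⟨⟨x, y⟩, hT⟩, g, h⟩
  change ((∃ p ∈ GLBgrp K, (g • coordSpan K x).map _ = h • coordSpan K y) ∧
      g • coordSpan K x ⊓ Vn K n = X ⊓ Vn K n ∧ h • coordSpan K y ⊓ Vn K n = Y ⊓ Vn K n ∧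
      ∀ k, n ≤ k → finrank K ↥(g • coordSpan K x ⊓ Vn K k) =
        finrank K ↥(h • coordSpan K y ⊓ Vn K k)) ↔
    ((∀ k : Fin n, x k = symbol X k ∧ y k = symbol Y k) ∧ ∀ k, n ≤ k → x k = y k) ∧ _ ∧ _
  simp only [smul_coordSpan_inf_Vn_eq_iff]
  constructor
  · rintro ⟨-, ⟨hx, hg⟩, ⟨hy, hh⟩, hk⟩
    refine ⟨⟨fun k => ⟨hx k k.2, hy k k.2⟩, fun k hnk => ?_⟩, hg, hh⟩
    have hsymbol := symbol_congr (hk k hnk) (hk (k + 1) (hnk.trans k.le_succ))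
    rwa [symbol_smul, symbol_smul, symbol_coordSpan, symbol_coordSpan] at hsymbol
  · rintro ⟨⟨hxy, htail⟩, hg, hh⟩
    have hx : ∀ k < n, x k = symbol X k := fun k hk => (hxy ⟨k, hk⟩).1
    have hy : ∀ k < n, y k = symbol Y k := fun k hk => (hxy ⟨k, hk⟩).2
    have hcount : Nat.count (x · = true) n = Nat.count (y · = true) n := by
      rw [← finrank_smul_coordSpan_inf_Vn g, smul_coordSpan_inf_Vn_eq_iff.2 ⟨hx, hg⟩, hdim,
        ← smul_coordSpan_inf_Vn_eq_iff.2 ⟨hy, hh⟩, finrank_smul_coordSpan_inf_Vn]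
    refine ⟨exists_mem_GLBgrp_map_smul_eq (exists_mem_GLBgrp_map_coordSpan_eq hcount htail) g h,
      ⟨hx, hg⟩, ⟨hy, hh⟩, fun k hk => ?_⟩
    simp only [finrank_smul_coordSpan_inf_Vn]
    exact count_eq_count_of_le hcount (fun i hi => by rw [htail i hi]) hk

end BasicSets

/-- **Proposition 5.9** (explicit values of the measure `ρ_{t₁,t₂}` on the basic sets of the
groupoid `Gr²(V)`): with `R_{t₁,t₂}` the measure on `T` determined by
`R(A(i;j)) = t₁^{∑ i_k} t₂^{n-∑ i_k}`, `μB` the Haar probability measure of `B`, and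
`ρ = ρ_{t₁,t₂}` the pushforward of `R ⊗ μB ⊗ μB` under `ψ`, one has, whenever
`(X,Y) ∈ Gr²(V)` and `dim(X ∩ V_k) = dim(Y ∩ V_k)` for all `k ≥ n`, with `m = dim(X ∩ V_n)`:
`ρ(U^n(X,Y)) = q^{m(m+1) - ∑_{k=1}^n k(Sym(X)_k + Sym(Y)_k)} · t₁^m · t₂^{n-m}`. -/
theorem rho_value_on_basic_sets
    (t₁ t₂ : ℝ) (ht₁ : 0 ≤ t₁) (ht₂ : 0 ≤ t₂) (hsum : t₁ + t₂ = 1)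
    (μB : Measure ↥(Bgrp F)) (hμBprob : IsProbabilityMeasure μB)
    (hμBinv : ∀ (b : ↥(Bgrp F)) (S : Set ↥(Bgrp F)), MeasurableSet S →
      μB ((fun x => b * x) ⁻¹' S) = μB S)
    (R : Measure ↥Tset)
    (hR : ∀ (n : ℕ) (c d : Fin n → Bool), trueCount c = trueCount d →
      R (Aset n c d) = ENNReal.ofReal (t₁ ^ trueCount c * t₂ ^ (n - trueCount c)))
    (ρ : Measure (Submodule F (Vinf F) × Submodule F (Vinf F)))
    (hρ : ∀ A : Set (Submodule F (Vinf F) × Submodule F (Vinf F)), MeasurableSet A →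
      ρ A = (R.prod (μB.prod μB)) (psiMap F ⁻¹' A))
    (n : ℕ) (X Y : Submodule F (Vinf F))
    (hXY : ∃ g ∈ GLBgrp F, Submodule.map (g : (Vinf F) →ₗ[F] (Vinf F)) X = Y)
    (hdim : ∀ k : ℕ, n ≤ k →
      Module.finrank F ↥(X ⊓ Vn F k) = Module.finrank F ↥(Y ⊓ Vn F k)) :
    ρ (Upair F n X Y)
      = ENNReal.ofReal ((Fintype.card F : ℝ) ^
          (((Module.finrank F ↥(X ⊓ Vn F n) * (Module.finrank F ↥(X ⊓ Vn F n) + 1) : ℕ) : ℤ)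
            - ∑ k ∈ Finset.range n, ((k : ℤ) + 1) * ((symInc F X k : ℤ) + (symInc F Y k : ℤ)))
          * t₁ ^ (Module.finrank F ↥(X ⊓ Vn F n))
          * t₂ ^ (n - Module.finrank F ↥(X ⊓ Vn F n))) := by
  have hm := hdim n le_rfl
  have hcount (Z : Submodule F (Vinf F)) :
      trueCount (fun k : Fin n => symbol Z k) = Module.finrank F ↥(Z ⊓ Vn F n) := by
    rw [trueCount_eq_count, finrank_inf_Vn]
  have hR' := hR n (fun k => symbol X k) (fun k => symbol Y k) (by rw [hcount, hcount, hm])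
  have hinv : μB.IsMulLeftInvariant := (forall_measure_preimage_mul_iff μB).1 hμBinv
  have hq : (Fintype.card F : ℝ) ≠ 0 := Nat.cast_ne_zero.2 Fintype.card_ne_zero
  rw [hρ _ (MeasurableSpace.measurableSet_generateFrom ⟨n, X, Y, rfl⟩),
    psiMap_preimage_Upair hm, Measure.prod_prod, Measure.prod_prod, hR', hcount,
    measure_setOf_smul_inf_Vn_eq, measure_setOf_smul_inf_Vn_eq, Nat.card_eq_fintype_card,
    ← ENNReal.ofReal_mul (by positivity), ← ENNReal.ofReal_mul (by positivity), ← zpow_add₀ hq,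
    ← finrank_mul_sub_sum_symInc_eq_neg_cellDim hm, mul_comm, mul_assoc]
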